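/- Hook length formula at roots of unity: for a partition λ ∈ Sh(d,c) and ζ = exp(2πi/n) with n = c+d, the Schur polynomial evaluated at the centered tuple ζ^{I_0} = (ζ^{-(d-1)/2},...,ζ^{(d-1)/2}) equals S_λ(ζ^{I_0}) = ∏_{(i,j)∈λ} sin((d-i+j)π/n) / ∏_{(i,j)∈λ} sin(hl(i,j)·π/n), where hl(i,j) = λ_i + λ^t_j - i - j + 1 is the hook length of the box (i,j). -/

import Mathlib

noncomputable section

/-- Complete homogeneous symmetric polynomial of degree `m` in `d` variables. -/
def Hpoly (d m : ℕ) (z : Fin d → ℂ) : ℂ :=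
  ∑ α ∈ Finset.Nat.antidiagonalTuple d m, ∏ i, z i ^ α i

/-- `H_k` for integer index `k` (zero for negative `k`). -/
def HZ (d : ℕ) (z : Fin d → ℂ) (k : ℤ) : ℂ :=
  if 0 ≤ k then Hpoly d k.toNat z else 0

/-- Schur polynomial via the Jacobi–Trudi determinant `det(H_{λ_i - i + j})`. -/
def schur (d : ℕ) (lam : Fin d → ℕ) (z : Fin d → ℂ) : ℂ :=
  Matrix.det (Matrix.of fun i j : Fin d => HZ d z ((lam i : ℤ) + j - i))

/-- The partitions fitting in a `d × c` box, as weakly decreasing functions. -/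
def box (d c : ℕ) : Finset (Fin d → Fin (c + 1)) :=
  Finset.univ.filter fun lam => ∀ i j : Fin d, i ≤ j → lam j ≤ lam i

/-- The conjugate (transpose) partition. -/
def conjPart (d c : ℕ) (lam : Fin d → ℕ) : Fin c → ℕ :=
  fun j => (Finset.univ.filter fun i : Fin d => (j : ℕ) < lam i).card

/-- The boxes `(i,j)` (0-indexed) of the Young diagram of `lam` inside the `d × c` box. -/
def cells (d c : ℕ) (lam : Fin d → ℕ) : Finset (Fin d × Fin c) :=
  Finset.univ.filter fun p => (p.2 : ℕ) < lam p.1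

/-- The hook length of the (0-indexed) box `(i,j)`:
`hl(i,j) = λ_i + λᵗ_j - i - j - 1` (which is `λ_i + λᵗ_j - i - j + 1` 1-indexed). -/
def hookLen (d c : ℕ) (lam : Fin d → ℕ) (p : Fin d × Fin c) : ℕ :=
  lam p.1 + conjPart d c lam p.2 - (p.1 + p.2 + 1)

/-- The centered tuple `ζ^{I_0} = (ζ^{-(d-1)/2}, …, ζ^{(d-1)/2})`, `ζ^m = exp(2πi·m/n)`. -/
def zI0 (d n : ℕ) : Fin d → ℂ := fun k =>
  Complex.exp (Real.pi * Complex.I * (2 * (k : ℂ) - ((d : ℂ) - 1)) / n)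

lemma Hpoly_zero (d : ℕ) (z : Fin d → ℂ) : Hpoly d 0 z = 1 := by
  simp [Hpoly, Finset.Nat.antidiagonalTuple_zero_right]

lemma Hpoly_succ_eq (d m : ℕ) (z : Fin (d + 1) → ℂ) :
    Hpoly (d + 1) m z =
      ∑ p ∈ Finset.HasAntidiagonal.antidiagonal m, z 0 ^ p.1 * Hpoly d p.2 (fun i => z i.succ) := by
  unfold Hpoly
  simp_rw [Finset.mul_sum]
  rw [Finset.sum_sigma', eq_comm]
  refine Finset.sum_bij (fun x _ => (Fin.cons x.1.1 x.2 : Fin (d + 1) → ℕ)) ?_ ?_ ?_ ?_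
  · rintro ⟨⟨a, b⟩, f⟩ h
    simp only [Finset.mem_sigma, Finset.HasAntidiagonal.mem_antidiagonal,
      Finset.Nat.mem_antidiagonalTuple] at h ⊢
    simp [Fin.sum_univ_succ, h.1, h.2]
  · rintro ⟨⟨a, b⟩, f⟩ h ⟨⟨a', b'⟩, f'⟩ h' he
    simp only [Finset.mem_sigma, Finset.HasAntidiagonal.mem_antidiagonal,
      Finset.Nat.mem_antidiagonalTuple] at h h'
    obtain ⟨h1, h2⟩ := Fin.cons_injective2 he
    simp only at h1 h2
    subst h1 h2
    have : b = b' := by omega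
    subst this
    rfl
  · intro f hf
    rw [Finset.Nat.mem_antidiagonalTuple, Fin.sum_univ_succ] at hf
    refine ⟨⟨(f 0, ∑ i : Fin d, f i.succ), fun i => f i.succ⟩, ?_, ?_⟩
    · simp [Finset.Nat.mem_antidiagonalTuple, hf]
    · exact Fin.cons_self_tail f
  · rintro ⟨⟨a, b⟩, f⟩ h
    simp [Fin.prod_univ_succ]

lemma Hpoly_rec (d m : ℕ) (z : Fin (d + 1) → ℂ) :
    Hpoly (d + 1) (m + 1) z =
      z 0 * Hpoly (d + 1) m z + Hpoly d (m + 1) (fun i => z i.succ) := by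
  rw [Hpoly_succ_eq, Hpoly_succ_eq, Finset.Nat.sum_antidiagonal_succ, Finset.mul_sum, add_comm]
  simp [pow_succ', mul_assoc]

lemma HZ_rec (d : ℕ) (z : Fin (d + 1) → ℂ) (k : ℤ) :
    HZ (d + 1) z (k + 1) = z 0 * HZ (d + 1) z k + HZ d (fun i => z i.succ) (k + 1) := by
  unfold HZ
  rcases lt_trichotomy k (-1) with h | h | h
  · rw [if_neg (by omega), if_neg (by omega), if_neg (by omega)]; simp
  · subst h; simp [Hpoly_zero]
  · obtain ⟨m, rfl⟩ := Int.eq_ofNat_of_zero_le (show 0 ≤ k by omega)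
    rw [if_pos (by omega), if_pos (by omega), if_pos (by omega)]
    have : ((m : ℤ) + 1).toNat = m + 1 := by omega
    rw [this, Int.toNat_natCast, Hpoly_rec]

lemma HZ_rep (d : ℕ) : ∀ (z : Fin d → ℂ), Function.Injective z →
    ∃ K : Fin d → ℂ, ∀ a : ℕ, HZ d z ((a : ℤ) - d + 1) = ∑ k, K k * z k ^ a := by
  induction d with
  | zero =>
    intro z _
    refine ⟨0, fun a => ?_⟩
    have h : (((a : ℤ)) + 1).toNat = a + 1 := by omega
    have h0 : (0 : ℤ) ≤ (a : ℤ) + 1 := by omega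
    simp [HZ, Hpoly, h, h0]
  | succ d ih =>
    intro z hz
    obtain ⟨K, hK⟩ := ih (fun i => z i.succ) (fun a b h => Fin.succ_injective _ (hz h))
    refine ⟨Fin.cons (HZ (d + 1) z (-d) - ∑ k : Fin d, K k / (z k.succ - z 0))
      (fun k => K k / (z k.succ - z 0)), fun a => ?_⟩
    induction a with
    | zero =>
      simp [Fin.sum_univ_succ]
    | succ a iha =>
      have e : ((a + 1 : ℕ) : ℤ) - ((d + 1 : ℕ) : ℤ) + 1 = ((a : ℤ) - ((d + 1 : ℕ) : ℤ) + 1) + 1 := by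
        push_cast; ring
      have e2 : ((a : ℤ) - ((d + 1 : ℕ) : ℤ) + 1) + 1 = (a : ℤ) - d + 1 := by
        push_cast; ring
      rw [e, HZ_rec, iha, e2, hK]
      simp only [Fin.sum_univ_succ, Fin.cons_zero, Fin.cons_succ]
      rw [mul_add, add_assoc, Finset.mul_sum, ← Finset.sum_add_distrib]
      congr 1
      · ring
      · refine Finset.sum_congr rfl fun k _ => ?_
        have : z k.succ - z 0 ≠ 0 := sub_ne_zero.2 fun h => Fin.succ_ne_zero k (hz h)
        field_simp
        ring

lemma schur_fac (d : ℕ) (z : Fin d → ℂ) (hz : Function.Injective z) :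
    ∃ C : ℂ, ∀ lam : Fin d → ℕ, schur d lam z =
      Matrix.det (Matrix.of fun i k : Fin d => z k ^ (lam i + (d - 1 - i))) * C := by
  obtain ⟨K, hK⟩ := HZ_rep d z hz
  refine ⟨Matrix.det (Matrix.of fun k j : Fin d => K k * z k ^ (j : ℕ)), fun lam => ?_⟩
  rw [← Matrix.det_mul, schur]
  congr 1
  ext i j
  have e : (lam i : ℤ) + j - i = ((lam i + (d - 1 - i) + j : ℕ) : ℤ) - d + 1 := by
    have := i.2
    omega
  rw [Matrix.of_apply, e, hK, Matrix.mul_apply]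
  refine Finset.sum_congr rfl fun k _ => ?_
  simp only [Matrix.of_apply]
  ring

lemma schur_zero (d : ℕ) (z : Fin d → ℂ) : schur d (fun _ => 0) z = 1 := by
  unfold schur
  rw [Matrix.det_of_isUpperTriangular]
  · simp [HZ, Hpoly_zero]
  · intro i j h
    have h' : (j : ℕ) < i := h
    simp only [Matrix.of_apply, HZ]
    rw [if_neg (by omega)]

lemma zI0_inj (c d : ℕ) : Function.Injective (zI0 d (c + d)) := by
  intro k l h
  unfold zI0 at h
  rw [Complex.exp_eq_exp_iff_exists_int] at h
  obtain ⟨m, hm⟩ := h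
  have hn : ((c + d : ℕ) : ℂ) ≠ 0 := by
    have := k.2
    exact_mod_cast (by omega : c + d ≠ 0)
  have hpi : (Real.pi : ℂ) * Complex.I * 2 ≠ 0 := by
    simp [Real.pi_ne_zero]
  have h2 : (k : ℂ) = l + m * ((c + d : ℕ) : ℂ) := by
    field_simp at hm
    apply mul_left_cancel₀ hpi
    linear_combination (Real.pi : ℂ) * Complex.I * hm
  have h3 : (k : ℤ) = l + m * ((c + d : ℕ) : ℤ) := by exact_mod_cast h2
  have hk := k.2
  have hl := l.2
  have hm0 : m = 0 := by
    by_contra hne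
    rcases lt_or_gt_of_ne hne with h | h
    · have : m * ((c + d : ℕ) : ℤ) ≤ (-1) * ((c + d : ℕ) : ℤ) :=
        mul_le_mul_of_nonneg_right (by omega) (by omega)
      push_cast at *
      omega
    · have : 1 * ((c + d : ℕ) : ℤ) ≤ m * ((c + d : ℕ) : ℤ) :=
        mul_le_mul_of_nonneg_right (by omega) (by omega)
      push_cast at *
      omega
  subst hm0
  ext
  omega

lemma alt_det (d n : ℕ) (a : Fin d → ℕ) :
    Matrix.det (Matrix.of fun i k : Fin d => zI0 d n k ^ a i) =
      (∏ i : Fin d, ∏ _j ∈ Finset.Ioi i, (-2 * Complex.I)) *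
        ((∏ i : Fin d, ∏ j ∈ Finset.Ioi i,
          Real.sin (((a i : ℝ) - a j) * Real.pi / n) : ℝ) : ℂ) := by
  set x : Fin d → ℂ := fun i => Complex.exp (Real.pi * Complex.I * a i / n) with hx
  have hx0 : ∀ i, x i ≠ 0 := fun i => Complex.exp_ne_zero _
  have h1 : (Matrix.of fun i k : Fin d => zI0 d n k ^ a i) =
      Matrix.of fun i k : Fin d => ((x i)⁻¹ ^ (d - 1)) *
        (Matrix.vandermonde fun i => x i ^ 2) i k := by
    ext i k
    have hd : ((d - 1 : ℕ) : ℂ) = (d : ℂ) - 1 := by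
      have := k.2
      rw [Nat.cast_sub (by omega)]; simp
    simp only [Matrix.of_apply, Matrix.vandermonde_apply, zI0, hx]
    rw [← Complex.exp_neg, ← Complex.exp_nat_mul, ← Complex.exp_nat_mul, ← Complex.exp_nat_mul,
      ← Complex.exp_nat_mul, ← Complex.exp_add, hd]
    congr 1
    push_cast
    ring
  rw [h1, Matrix.det_mul_column, Matrix.det_vandermonde]
  have h2 : ∏ i : Fin d, ∏ j ∈ Finset.Ioi i, (x j * x i) = ∏ i, x i ^ (d - 1) := by
    rw [Finset.prod_prod_Ioi_mul_eq_prod_prod_off_diag (fun j _ => x j), Finset.prod_comm' 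
      (t' := Finset.univ) (s' := fun i => {i}ᶜ)]
    · simp [Finset.card_compl]
    · intro i j; simp [eq_comm]
  have h3 : ∏ i : Fin d, ∏ j ∈ Finset.Ioi i, (x j ^ 2 - x i ^ 2) =
      (∏ i : Fin d, ∏ j ∈ Finset.Ioi i, (x j * x i)) *
      ∏ i : Fin d, ∏ j ∈ Finset.Ioi i,
        ((-2 * Complex.I) * (Real.sin (((a i : ℝ) - a j) * Real.pi / n) : ℂ)) := by
    rw [← Finset.prod_mul_distrib]
    refine Finset.prod_congr rfl fun i _ => ?_
    rw [← Finset.prod_mul_distrib]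
    refine Finset.prod_congr rfl fun j _ => ?_
    have e1 : Complex.exp (((a i : ℂ) - a j) * Real.pi / n * Complex.I) = x i / x j := by
      rw [hx]; simp only; rw [← Complex.exp_sub]; congr 1; ring
    have e2 : Complex.exp (-(((a i : ℂ) - a j) * Real.pi / n) * Complex.I) = x j / x i := by
      rw [hx]; simp only; rw [← Complex.exp_sub]; congr 1; ring
    have := hx0 i
    have := hx0 j
    rw [Complex.ofReal_sin, Complex.sin]
    push_cast
    rw [e1, e2]
    field_simp
    rw [Complex.I_sq]
    ring
  rw [h3, h2]
  have h4 : (∏ i, (x i)⁻¹ ^ (d - 1)) * ∏ i, x i ^ (d - 1) = 1 := by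
    rw [← Finset.prod_mul_distrib]
    refine Finset.prod_eq_one fun i _ => ?_
    rw [← mul_pow, inv_mul_cancel₀ (hx0 i), one_pow]
  rw [← mul_assoc, h4, one_mul]
  simp_rw [Finset.prod_mul_distrib]
  push_cast
  rfl

lemma conj_iff (d c : ℕ) (lam : Fin d → ℕ) (hl : Antitone lam) (k : Fin d) (j : Fin c) :
    (k : ℕ) < conjPart d c lam j ↔ (j : ℕ) < lam k := by
  unfold conjPart
  constructor
  · intro h
    by_contra hj
    have : (Finset.univ.filter fun i : Fin d => (j : ℕ) < lam i) ⊆ Finset.Iio k := by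
      intro i hi
      simp only [Finset.mem_filter, Finset.mem_univ, true_and, Finset.mem_Iio] at hi ⊢
      by_contra hik
      have := hl (not_lt.1 hik)
      omega
    have := Finset.card_le_card this
    rw [Fin.card_Iio] at this
    omega
  · intro h
    have : Finset.Iic k ⊆ (Finset.univ.filter fun i : Fin d => (j : ℕ) < lam i) := by
      intro i hi
      simp only [Finset.mem_filter, Finset.mem_univ, true_and, Finset.mem_Iic] at hi ⊢
      have := hl hi
      omega
    have := Finset.card_le_card this
    rw [Fin.card_Iic] at this
    omega

lemma conj_anti (d c : ℕ) (lam : Fin d → ℕ) {j j' : Fin c} (h : j ≤ j') :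
    conjPart d c lam j' ≤ conjPart d c lam j := by
  refine Finset.card_le_card fun i hi => ?_
  have : (j : ℕ) ≤ j' := h
  simp only [Finset.mem_filter, Finset.mem_univ, true_and] at hi ⊢
  omega

lemma conj_le (d c : ℕ) (lam : Fin d → ℕ) (j : Fin c) : conjPart d c lam j ≤ d := by
  unfold conjPart
  simpa using Finset.card_le_univ (Finset.univ.filter fun i : Fin d => (j : ℕ) < lam i)

lemma card_row (c m : ℕ) (hm : m ≤ c) :
    (Finset.univ.filter fun j : Fin c => (j : ℕ) < m).card = m := by
  rw [Fin.card_filter_val_lt]; omega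

/-- The row identity for hooks. -/
lemma hook_row (d c : ℕ) (lam : Fin d → ℕ) (hl : Antitone lam) (hc : ∀ i, lam i ≤ c)
    (s : ℕ → ℝ) (i : Fin d) :
    (∏ j ∈ Finset.univ.filter (fun j : Fin c => (j : ℕ) < lam i), s (hookLen d c lam (i, j))) *
      ∏ k ∈ Finset.Ioi i, s (lam i + k - i - lam k) =
    ∏ m ∈ Finset.Icc 1 (lam i + (d - 1 - i)), s m := by
  have inj1 : Set.InjOn (fun j : Fin c => hookLen d c lam (i, j))
      (Finset.univ.filter (fun j : Fin c => (j : ℕ) < lam i) : Finset (Fin c)) := by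
    intro j hj j' hj' h
    simp only [Finset.coe_filter, Finset.mem_univ, true_and, Set.mem_ofPred_eq] at hj hj'
    have a1 := (conj_iff d c lam hl i j).2 hj
    have a2 := (conj_iff d c lam hl i j').2 hj'
    simp only [hookLen] at h
    rcases le_total j j' with hh | hh
    · have := conj_anti d c lam hh
      have : (j : ℕ) ≤ j' := hh
      ext; omega
    · have := conj_anti d c lam hh
      have : (j' : ℕ) ≤ j := hh
      ext; omega
  have inj2 : Set.InjOn (fun k : Fin d => lam i + k - i - lam k)
      (Finset.Ioi i : Finset (Fin d)) := by
    intro k hk k' hk' h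
    simp only [Finset.coe_Ioi, Set.mem_Ioi] at hk hk'
    have b1 := hl hk.le
    have b2 := hl hk'.le
    have c1 : (i : ℕ) < k := hk
    have c2 : (i : ℕ) < k' := hk'
    simp only at h
    rcases le_total k k' with hh | hh
    · have := hl hh
      have : (k : ℕ) ≤ k' := hh
      ext; omega
    · have := hl hh
      have : (k' : ℕ) ≤ k := hh
      ext; omega
  have hdisj : Disjoint
      ((Finset.univ.filter (fun j : Fin c => (j : ℕ) < lam i)).image
        (fun j : Fin c => hookLen d c lam (i, j)))
      ((Finset.Ioi i).image (fun k : Fin d => lam i + k - i - lam k)) := by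
    rw [Finset.disjoint_left]
    intro m h1 h2
    simp only [Finset.mem_image, Finset.mem_filter, Finset.mem_univ, true_and,
      Finset.mem_Ioi] at h1 h2
    obtain ⟨j, hj, rfl⟩ := h1
    obtain ⟨k, hk, h⟩ := h2
    have b1 := hl hk.le
    have c1 : (i : ℕ) < k := hk
    have a1 := (conj_iff d c lam hl i j).2 hj
    have a2 := conj_iff d c lam hl k j
    simp only [hookLen] at h
    by_cases hjk : (j : ℕ) < lam k
    · have := a2.2 hjk
      omega
    · have : ¬ (k : ℕ) < conjPart d c lam j := fun h => hjk (a2.1 h)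
      omega
  rw [← Finset.prod_image (f := s) inj1, ← Finset.prod_image (f := s) inj2,
    ← Finset.prod_union hdisj]
  congr 1
  apply Finset.eq_of_subset_of_card_le
  · intro m hm
    simp only [Finset.mem_union, Finset.mem_image, Finset.mem_filter, Finset.mem_univ, true_and,
      Finset.mem_Ioi, Finset.mem_Icc] at hm ⊢
    have := i.2
    rcases hm with ⟨j, hj, rfl⟩ | ⟨k, hk, rfl⟩
    · have a1 := (conj_iff d c lam hl i j).2 hj
      have a2 := conj_le d c lam j
      simp only [hookLen]
      omega
    · have b1 := hl hk.le
      have c1 : (i : ℕ) < k := hk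
      have := k.2
      omega
  · rw [Finset.card_union_of_disjoint hdisj, Finset.card_image_of_injOn inj1,
      Finset.card_image_of_injOn inj2, card_row c _ (hc i), Fin.card_Ioi, Nat.card_Icc]
    omega

lemma row_range (c m : ℕ) (hm : m ≤ c) (f : ℕ → ℝ) :
    ∏ j ∈ Finset.univ.filter (fun j : Fin c => (j : ℕ) < m), f j = ∏ j ∈ Finset.range m, f j := by
  refine Finset.prod_bij (fun j _ => (j : ℕ)) ?_ ?_ ?_ ?_
  · simp
  · intro a _ b _ h; exact Fin.ext h
  · intro b hb
    have := Finset.mem_range.1 hb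
    exact ⟨⟨b, by omega⟩, by simpa using this, rfl⟩
  · simp

lemma content_row (d c m : ℕ) (hm : m ≤ c) (s : ℕ → ℝ) (i : Fin d) :
    (∏ j ∈ Finset.univ.filter (fun j : Fin c => (j : ℕ) < m), s (d + j - i)) *
      ∏ k ∈ Finset.Ioi i, s (k - i) =
    ∏ t ∈ Finset.Icc 1 (m + (d - 1 - i)), s t := by
  have hi := i.2
  have h0 := hook_row d c (fun _ => 0) (fun _ _ _ => le_rfl) (by simp) s i
  simp only [Nat.not_lt_zero, Finset.filter_false, Finset.prod_empty, one_mul, zero_add,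
    Nat.sub_zero] at h0
  rw [h0, row_range c m hm (fun j => s (d + j - i)), mul_comm]
  clear h0 hm
  induction m with
  | zero => simp
  | succ m ih =>
    rw [Finset.prod_range_succ, ← mul_assoc, ih,
      show m + 1 + (d - 1 - (i : ℕ)) = (m + (d - 1 - i)) + 1 by omega,
      Finset.prod_Icc_succ_top (by omega)]
    congr 2
    omega

lemma prod_cells (d c : ℕ) (lam : Fin d → ℕ) (f : Fin d × Fin c → ℝ) :
    ∏ p ∈ cells d c lam, f p =
      ∏ i, ∏ j ∈ Finset.univ.filter (fun j : Fin c => (j : ℕ) < lam i), f (i, j) := by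
  unfold cells
  rw [Finset.prod_filter, ← Finset.univ_product_univ, Finset.prod_product]
  simp_rw [Finset.prod_filter]

/-- Hook length formula at roots of unity: for `λ ∈ Sh(d,c)` and `n = c + d`,
`S_λ(ζ^{I_0}) = ∏_{(i,j)∈λ} sin((d-i+j)π/n) / ∏_{(i,j)∈λ} sin(hl(i,j)π/n)`. -/
theorem stmt16 (c d n : ℕ) (hn : n = c + d)
    (lam : Fin d → Fin (c + 1)) (hlam : lam ∈ box d c) :
    schur d (fun i => (lam i : ℕ)) (zI0 d n) =
      (((∏ p ∈ cells d c fun i => (lam i : ℕ),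
            Real.sin ((d + (p.2 : ℕ) - (p.1 : ℕ) : ℕ) * Real.pi / n)) /
          ∏ p ∈ cells d c fun i => (lam i : ℕ),
            Real.sin ((hookLen d c (fun i => (lam i : ℕ)) p) * Real.pi / n) : ℝ) : ℂ) := by
  subst hn
  set L : Fin d → ℕ := fun i => (lam i : ℕ) with hL
  have hc : ∀ i, L i ≤ c := fun i => Nat.lt_succ_iff.1 (lam i).2
  have hl : Antitone L := fun i j hij => (Finset.mem_filter.1 hlam).2 i j hij
  set s : ℕ → ℝ := fun m => Real.sin ((m : ℝ) * Real.pi / (c + d : ℕ)) with hs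
  have hs0 : ∀ m, 1 ≤ m → m < c + d → s m ≠ 0 := by
    intro m h1 h2
    have hpos : (0 : ℝ) < (c + d : ℕ) := by exact_mod_cast (by omega : 0 < c + d)
    have h1' : (0 : ℝ) < m := by exact_mod_cast h1
    have h2' : (m : ℝ) < (c + d : ℕ) := by exact_mod_cast h2
    refine (Real.sin_pos_of_pos_of_lt_pi (by positivity) ?_).ne'
    rw [div_lt_iff₀ hpos, mul_comm]
    exact mul_lt_mul_of_pos_left h2' Real.pi_pos
  obtain ⟨C, hC⟩ := schur_fac d (zI0 d (c + d)) (zI0_inj c d)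
  have key1 := hC L
  have key0 := hC (fun _ => 0)
  rw [schur_zero, alt_det] at key0
  rw [alt_det] at key1
  have r1 : ∏ i : Fin d, ∏ j ∈ Finset.Ioi i,
      Real.sin ((((L i + (d - 1 - i) : ℕ) : ℝ) - (L j + (d - 1 - j) : ℕ)) * Real.pi / (c + d : ℕ))
      = ∏ i : Fin d, ∏ k ∈ Finset.Ioi i, s (L i + k - i - L k) := by
    refine Finset.prod_congr rfl fun i _ => Finset.prod_congr rfl fun k hk => ?_
    have hk' := Finset.mem_Ioi.1 hk
    have b1 := hl hk'.le
    have c1 : (i : ℕ) < k := hk'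
    have := k.2
    simp only [hs]
    rw [← Nat.cast_sub (by omega)]
    congr 4
    omega
  have r0 : ∏ i : Fin d, ∏ j ∈ Finset.Ioi i,
      Real.sin ((((0 + (d - 1 - i) : ℕ) : ℝ) - (0 + (d - 1 - j) : ℕ)) * Real.pi / (c + d : ℕ))
      = ∏ i : Fin d, ∏ k ∈ Finset.Ioi i, s (k - i) := by
    refine Finset.prod_congr rfl fun i _ => Finset.prod_congr rfl fun k hk => ?_
    have hk' := Finset.mem_Ioi.1 hk
    have c1 : (i : ℕ) < k := hk'
    have := k.2
    simp only [hs]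
    rw [← Nat.cast_sub (by omega)]
    congr 4
    omega
  rw [r1] at key1
  rw [r0] at key0
  rw [prod_cells, prod_cells]
  change _ = (((∏ i, ∏ j ∈ Finset.univ.filter (fun j : Fin c => (j : ℕ) < L i), s (d + j - i)) /
    ∏ i, ∏ j ∈ Finset.univ.filter (fun j : Fin c => (j : ℕ) < L i),
      s (hookLen d c L (i, j)) : ℝ) : ℂ)
  have row : (∏ i, ∏ j ∈ Finset.univ.filter (fun j : Fin c => (j : ℕ) < L i),
        s (hookLen d c L (i, j))) * (∏ i : Fin d, ∏ k ∈ Finset.Ioi i, s (L i + k - i - L k)) =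
      (∏ i, ∏ j ∈ Finset.univ.filter (fun j : Fin c => (j : ℕ) < L i), s (d + j - i)) *
        (∏ i : Fin d, ∏ k ∈ Finset.Ioi i, s (k - i)) := by
    rw [← Finset.prod_mul_distrib, ← Finset.prod_mul_distrib]
    refine Finset.prod_congr rfl fun i _ => ?_
    rw [hook_row d c L hl hc s i, content_row d c (L i) (hc i) s i]
  have hH : (∏ i, ∏ j ∈ Finset.univ.filter (fun j : Fin c => (j : ℕ) < L i),
        s (hookLen d c L (i, j))) ≠ 0 := by
    refine Finset.prod_ne_zero_iff.2 fun i _ => Finset.prod_ne_zero_iff.2 fun j hj => ?_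
    have hj' : (j : ℕ) < L i := by simpa using hj
    have a1 := (conj_iff d c L hl i j).2 hj'
    have a2 := conj_le d c L j
    have := hc i
    have := i.2
    apply hs0 <;> simp only [hookLen] <;> omega
  set H := ∏ i, ∏ j ∈ Finset.univ.filter (fun j : Fin c => (j : ℕ) < L i),
        s (hookLen d c L (i, j))
  set N := ∏ i, ∏ j ∈ Finset.univ.filter (fun j : Fin c => (j : ℕ) < L i), s (d + j - i)
  set A := ∏ i : Fin d, ∏ k ∈ Finset.Ioi i, s (L i + k - i - L k)
  set A0 := ∏ i : Fin d, ∏ k ∈ Finset.Ioi i, s (k - i)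
  have row' : (H : ℂ) * A = N * A0 := by exact_mod_cast row
  have hH' : (H : ℂ) ≠ 0 := by exact_mod_cast hH
  rw [key1, Complex.ofReal_div, eq_div_iff hH']
  set B := ∏ i : Fin d, ∏ _j ∈ Finset.Ioi i, (-2 * Complex.I)
  linear_combination (B * C) * row' - (N : ℂ) * key0
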